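/- Let $m \ge 2$ and $\lambda \in \mathbb{R}$, let $H \in C^\infty(\mathbb{R})$ satisfy $H(t) = 0$ for $t \le -2$ and $H(t) = 1$ for $t \ge -1$, and let $a \in C_c^\infty(\mathbb{R}^m \times \mathbb{R}^m ; \mathbb{C})$. Write points of $\mathbb{R}^m$ as $x = (x_1, x')$ and $\xi = (\xi_1, \xi')$ with $x', \xi' \in \mathbb{R}^{m-1}$, and let $\varepsilon_m' = (0,\dots,0,1) \in \mathbb{R}^{m-1}$. Then for each $h > 0$ the integral below converges absolutely and $\lim_{h \to 0^+} (\pi h)^{-m} \int_{\mathbb{R}^m} \int_{\mathbb{R}} \int_{\mathbb{R}^m} e^{-2\lambda x_1} H(x_1 + y_1) H(x_1 - y_1)\, e^{\frac{2i}{h} y_1 \xi_1}\, e^{-\frac{1}{h}(|x'|^2 + |\xi' - \varepsilon_m'|^2)}\, a(x,\xi)\, d\xi\, dy_1\, dx = \int_{\mathbb{R}} H(x_1)^2\, e^{-2\lambda x_1}\, a\big((x_1, 0), (0, \varepsilon_m')\big)\, dx_1$. -/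

import Mathlib

/-!
The variable `y₁` enters only through `H(x₁ + y₁) H(x₁ - y₁)` and the phase, so integrating it out
first gives the Fourier transform of the smooth compactly supported profile
`f_{x₁} : y ↦ H(x₁ + y) H(x₁ - y)` at `-ξ₁ / (πh)`. With `c = πh`, the affine substitution
`x' = √c u`, `ξ' = ε'ₘ + √c v`, `ξ₁ = -c w` has Jacobian `c ^ m`, which cancels the prefactor
exactly, and turns the Gaussians into `e^{-π|u|²}` and `e^{-π|v|²}`, of integral one. What remains is
`∫∫ e^{-2λx₁} 𝓕 f_{x₁}(w) e^{-π(|u|² + |v|²)} a((x₁, √c u), (-c w, ε'ₘ + √c v))`,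
where `c` occurs only inside the continuous bounded symbol `a`.

Two integrations by parts give `|𝓕 f_{x₁}(w)| ≤ C / (1 + w²)` uniformly for `x₁` in the compact
projection of the support of `a` (`exists_fourier_profile_bound`), which yields a majorant
independent of `c`. Dominated convergence replaces `c` by `0`; in the limit the Gaussian integrals
are one, and Fourier inversion at `0` gives `∫ 𝓕 f_{x₁} = f_{x₁}(0) = H(x₁)²`
(`integral_fourier_profile`).
-/

open Filter Topology MeasureTheory

/-- The integrand of the wave-packet computation: for `p = (x, y₁, ξ)`,
`e^{-2λx₁} H(x₁+y₁) H(x₁-y₁) e^{(2i/h) y₁ ξ₁} e^{-(1/h)(|x'|² + |ξ'-ε'ₘ|²)} a(x,ξ)`,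
where `i0` is the first index and `iLast` the last index of `Fin m`. -/
noncomputable def wavePacketIntegrand (m : ℕ) (lam : ℝ) (H : ℝ → ℝ)
    (a : (Fin m → ℝ) × (Fin m → ℝ) → ℂ) (i0 iLast : Fin m) (h : ℝ)
    (p : (Fin m → ℝ) × ℝ × (Fin m → ℝ)) : ℂ :=
  (↑(Real.exp (-2 * lam * p.1 i0)) : ℂ) *
    (↑(H (p.1 i0 + p.2.1)) : ℂ) * (↑(H (p.1 i0 - p.2.1)) : ℂ) *
    Complex.exp ((2 * Complex.I / h) * (↑p.2.1 * ↑(p.2.2 i0))) *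
    (↑(Real.exp (-(1 / h) *
        ((∑ i, if i = i0 then 0 else (p.1 i) ^ 2) +
          ∑ i, if i = i0 then 0 else (p.2.2 i - if i = iLast then 1 else 0) ^ 2))) : ℂ) *
    a (p.1, p.2.2)

open scoped FourierTransform

noncomputable section

/-- The profile `y ↦ H(x + y) H(x - y)`, whose Fourier transform in `y` carries the
oscillatory integral in `y₁`. -/
def profile (H : ℝ → ℝ) (x y : ℝ) : ℂ := ((H (x + y) * H (x - y) : ℝ) : ℂ)

/-- The Gaussian `∏_{i ≠ i0} e^{-π xᵢ²}` in the transversal variables, complex valued. It is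
normalised to have integral one over those variables. -/
def gauss {m : ℕ} (i0 : Fin m) (x : Fin m → ℝ) : ℂ :=
  ∏ i, if i = i0 then 1 else ((Real.exp (-Real.pi * (x i) ^ 2) : ℝ) : ℂ)

/-- The point of phase space at which the symbol is evaluated after rescaling: the `i0`-th position
variable is kept, the `i0`-th frequency is scaled by `-c`, and the transversal variables are
scaled by `√c` around `x' = 0`, `ξ' = ε'ₘ`. -/
def scaledPoint {m : ℕ} (i0 iLast : Fin m) (c : ℝ) (q : (Fin m → ℝ) × (Fin m → ℝ)) :
    (Fin m → ℝ) × (Fin m → ℝ) :=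
  (fun i => (if i = i0 then 1 else √c) * q.1 i,
   fun i => (if i = i0 then -c else √c) * q.2 i + if i = iLast then 1 else 0)

/-- The integrand over phase space after integrating out `y₁` and rescaling, with `c = πh`. -/
def scaledIntegrand {m : ℕ} (lam : ℝ) (H : ℝ → ℝ) (a : (Fin m → ℝ) × (Fin m → ℝ) → ℂ)
    (i0 iLast : Fin m) (c : ℝ) (q : (Fin m → ℝ) × (Fin m → ℝ)) : ℂ :=
  ((Real.exp (-2 * lam * q.1 i0) : ℝ) : ℂ) * 𝓕 (profile H (q.1 i0)) (q.2 i0) *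
    (gauss i0 q.1 * gauss i0 q.2) * a (scaledPoint i0 iLast c q)

/-! ### The profile and its Fourier transform -/

section Profile

variable {H : ℝ → ℝ}

lemma profile_contDiff (hH : ContDiff ℝ (⊤ : ℕ∞) H) (x : ℝ) :
    ContDiff ℝ (⊤ : ℕ∞) (profile H x) := by
  unfold profile
  refine Complex.ofRealCLM.contDiff.comp ?_
  exact (hH.comp (contDiff_const.add contDiff_id)).mul (hH.comp (contDiff_const.sub contDiff_id))

lemma profile_continuous (hH : Continuous H) : Continuous fun p : ℝ × ℝ => profile H p.1 p.2 := by
  unfold profile; fun_prop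

lemma abs_le_of_mul_ne_zero (hH0 : ∀ t : ℝ, t ≤ -2 → H t = 0) {R x y : ℝ} (hx : |x| ≤ R)
    (h : H (x + y) * H (x - y) ≠ 0) : |y| ≤ R + 2 := by
  have h1 : -2 < x + y := by
    by_contra! h'; exact h (by rw [hH0 _ h', zero_mul])
  have h2 : -2 < x - y := by
    by_contra! h'; exact h (by rw [hH0 _ h', mul_zero])
  have := abs_le.1 hx
  exact abs_le.2 ⟨by linarith, by linarith⟩

lemma tsupport_profile (hH0 : ∀ t : ℝ, t ≤ -2 → H t = 0) {R x : ℝ} (hx : |x| ≤ R) :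
    tsupport (profile H x) ⊆ Set.Icc (-(R + 2)) (R + 2) := by
  refine closure_minimal ?_ isClosed_Icc
  intro y hy
  refine abs_le.1 (abs_le_of_mul_ne_zero hH0 hx (y := y) fun h => hy ?_)
  rw [profile, h, Complex.ofReal_zero]

lemma hasCompactSupport_profile (hH0 : ∀ t : ℝ, t ≤ -2 → H t = 0) (x : ℝ) :
    HasCompactSupport (profile H x) :=
  isCompact_Icc.of_isClosed_subset (isClosed_tsupport _) (tsupport_profile hH0 le_rfl)

lemma support_iteratedDeriv_profile (n : ℕ) (x : ℝ) :
    Function.support (iteratedDeriv n (profile H x)) ⊆ tsupport (profile H x) := by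
  intro y hy
  refine support_iteratedFDeriv_subset (𝕜 := ℝ) n ?_
  intro h
  apply hy
  simp [iteratedDeriv, h]

lemma iteratedDeriv_two_profile (hH : ContDiff ℝ (⊤ : ℕ∞) H) (x y : ℝ) :
    iteratedDeriv 2 (profile H x) y =
      ((deriv (deriv H) (x + y) * H (x - y) - deriv H (x + y) * deriv H (x - y) -
        (deriv H (x + y) * deriv H (x - y) - H (x + y) * deriv (deriv H) (x - y)) : ℝ) : ℂ) := by
  have hH' : ContDiff ℝ (⊤ : ℕ∞) (deriv H) := hH.iterate_deriv 1
  have plus : ∀ {f : ℝ → ℝ}, ContDiff ℝ (⊤ : ℕ∞) f → ∀ y,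
      HasDerivAt (fun y => f (x + y)) (deriv f (x + y)) y := fun {f} hf y =>
    (hf.differentiable (by simp) (x + y)).hasDerivAt.comp_const_add x y
  have minus : ∀ {f : ℝ → ℝ}, ContDiff ℝ (⊤ : ℕ∞) f → ∀ y,
      HasDerivAt (fun y => f (x - y)) (-deriv f (x - y)) y := fun {f} hf y =>
    (hf.differentiable (by simp) (x - y)).hasDerivAt.comp_const_sub x y
  have d1 : deriv (profile H x) = fun y =>
      ((deriv H (x + y) * H (x - y) - H (x + y) * deriv H (x - y) : ℝ) : ℂ) := by
    ext y
    refine HasDerivAt.deriv ?_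
    refine HasDerivAt.ofReal_comp (f := fun y => H (x + y) * H (x - y)) ?_
    exact ((plus hH y).fun_mul (minus hH y)).congr_deriv (by ring)
  rw [iteratedDeriv_succ, iteratedDeriv_one, d1]
  refine HasDerivAt.deriv ?_
  refine HasDerivAt.ofReal_comp
    (f := fun y => deriv H (x + y) * H (x - y) - H (x + y) * deriv H (x - y)) ?_
  exact (((plus hH' y).fun_mul (minus hH y)).fun_sub
    ((plus hH y).fun_mul (minus hH' y))).congr_deriv (by ring)

/-- A jointly continuous family whose members with `|x| ≤ R` are supported in a common
compact interval is uniformly bounded for `|x| ≤ R`. -/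
lemma exists_bound_of_support {f : ℝ → ℝ → ℂ} (hf : Continuous fun p : ℝ × ℝ => f p.1 p.2)
    {R S : ℝ} (hs : ∀ x, |x| ≤ R → Function.support (f x) ⊆ Set.Icc (-S) S) :
    ∃ M, 0 ≤ M ∧ ∀ x, |x| ≤ R → ∀ y, ‖f x y‖ ≤ M := by
  obtain ⟨M, hM⟩ := (isCompact_Icc.prod isCompact_Icc :
    IsCompact (Set.Icc (-R) R ×ˢ Set.Icc (-S) S)).exists_bound_of_continuousOn hf.continuousOn
  refine ⟨max M 0, le_max_right _ _, fun x hx y => ?_⟩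
  by_cases hy : f x y = 0
  · simp [hy]
  · exact (hM (x, y) ⟨abs_le.1 hx, hs x hx hy⟩).trans (le_max_left _ _)

lemma norm_fourier_le_of_support {f : ℝ → ℂ} {M S : ℝ} (hM : ∀ y, ‖f y‖ ≤ M)
    (hS : 0 ≤ S) (hs : Function.support f ⊆ Set.Icc (-S) S) (w : ℝ) :
    ‖𝓕 f w‖ ≤ M * (2 * S) := by
  rw [Real.fourier_real_eq_integral_exp_smul]
  rw [← setIntegral_eq_integral_of_forall_compl_eq_zero (s := Set.Icc (-S) S)]
  · refine (norm_setIntegral_le_of_norm_le_const (C := M) (by simp) ?_).trans ?_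
    · intro y _
      rw [norm_smul, Complex.norm_exp_ofReal_mul_I, one_mul]
      exact hM y
    · rw [Real.volume_real_Icc_of_le (by linarith)]
      linarith
  · intro y hy
    have : f y = 0 := by
      by_contra h; exact hy (hs h)
    simp [this]

/-- Uniform quadratic decay of the Fourier transforms of the profiles, from two integrations by
parts in `y`. -/
lemma exists_fourier_profile_bound (hH : ContDiff ℝ (⊤ : ℕ∞) H)
    (hH0 : ∀ t : ℝ, t ≤ -2 → H t = 0) (R : ℝ) :
    ∃ C, 0 ≤ C ∧ ∀ x, |x| ≤ R → ∀ w, ‖𝓕 (profile H x) w‖ ≤ C * (1 + w ^ 2)⁻¹ := by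
  have hH' : ContDiff ℝ (⊤ : ℕ∞) (deriv H) := hH.iterate_deriv 1
  have hH'' : ContDiff ℝ (⊤ : ℕ∞) (deriv (deriv H)) := hH'.iterate_deriv 1
  rcases lt_or_ge R 0 with hR | hR
  · exact ⟨0, le_rfl, fun x hx => absurd ((abs_nonneg x).trans hx) (not_le.2 hR)⟩
  obtain ⟨M₀, hM₀, hb₀⟩ := exists_bound_of_support (profile_continuous hH.continuous) (R := R)
    fun x hx => (subset_tsupport _).trans (tsupport_profile hH0 hx)
  obtain ⟨M₂, hM₂, hb₂⟩ := exists_bound_of_support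
    (f := fun x y => iteratedDeriv 2 (profile H x) y) (R := R) (S := R + 2) (by
      simp_rw [iteratedDeriv_two_profile hH]
      have := hH.continuous
      have := hH'.continuous
      have := hH''.continuous
      fun_prop)
    fun x hx => (support_iteratedDeriv_profile 2 x).trans (tsupport_profile hH0 hx)
  refine ⟨M₀ * (2 * (R + 2)) + M₂ * (2 * (R + 2)), by positivity, fun x hx w => ?_⟩
  have h0 := norm_fourier_le_of_support (hb₀ x hx) (by linarith)
    ((subset_tsupport _).trans (tsupport_profile hH0 hx)) w
  have h2 := norm_fourier_le_of_support (hb₂ x hx) (by linarith)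
    ((support_iteratedDeriv_profile 2 x).trans (tsupport_profile hH0 hx)) w
  have key : 𝓕 (iteratedDeriv 2 (profile H x)) w =
      (2 * Real.pi * Complex.I * w) ^ 2 • 𝓕 (profile H x) w := by
    have := Real.fourier_iteratedDeriv (n := 2) (N := ⊤) (profile_contDiff hH x)
      (fun n _ => ?_) le_top
    · exact congrFun this w
    · refine Continuous.integrable_of_hasCompactSupport
        ((profile_contDiff hH x).continuous_iteratedDeriv n (by exact_mod_cast le_top)) ?_
      exact (hasCompactSupport_profile hH0 x).of_isClosed_subset (isClosed_tsupport _)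
        (closure_minimal (support_iteratedDeriv_profile n x) (isClosed_tsupport _))
  change ‖𝓕 (iteratedDeriv 2 (profile H x)) w‖ ≤ _ at h2
  rw [key, norm_smul] at h2
  have hn : ‖(2 * Real.pi * Complex.I * w : ℂ) ^ 2‖ = (2 * Real.pi) ^ 2 * w ^ 2 := by
    simp [mul_pow, abs_of_pos Real.pi_pos]
  rw [hn] at h2
  have hpi : 1 ≤ (2 * Real.pi) ^ 2 := by nlinarith [Real.pi_gt_three]
  rw [← div_eq_mul_inv, le_div_iff₀ (by positivity)]
  have : w ^ 2 * ‖𝓕 (profile H x) w‖ ≤ (2 * Real.pi) ^ 2 * w ^ 2 * ‖𝓕 (profile H x) w‖ := by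
    have : 0 ≤ w ^ 2 * ‖𝓕 (profile H x) w‖ := by positivity
    nlinarith
  nlinarith

lemma stronglyMeasurable_fourier_profile (hH : Continuous H) :
    StronglyMeasurable fun p : ℝ × ℝ => 𝓕 (profile H p.1) p.2 := by
  simp_rw [Real.fourier_real_eq_integral_exp_smul]
  refine StronglyMeasurable.integral_prod_right'
    (f := fun z : (ℝ × ℝ) × ℝ => Complex.exp (((-2 * Real.pi * z.2 * z.1.2 : ℝ) : ℂ) * Complex.I) •
      profile H z.1.1 z.2) ?_
  refine Continuous.stronglyMeasurable ?_
  unfold profile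
  fun_prop

lemma integrable_fourier_profile (hH : ContDiff ℝ (⊤ : ℕ∞) H)
    (hH0 : ∀ t : ℝ, t ≤ -2 → H t = 0) (x : ℝ) : Integrable (𝓕 (profile H x)) := by
  obtain ⟨C, -, hC⟩ := exists_fourier_profile_bound hH hH0 |x|
  refine (integrable_inv_one_add_sq.const_mul C).mono' ?_ (.of_forall (hC x le_rfl))
  exact ((stronglyMeasurable_fourier_profile hH.continuous).comp_measurable
    (measurable_const.prodMk measurable_id : Measurable fun w : ℝ => (x, w))).aestronglyMeasurable

/-- Fourier inversion at `0` evaluates the profile on the diagonal. -/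
lemma integral_fourier_profile (hH : ContDiff ℝ (⊤ : ℕ∞) H)
    (hH0 : ∀ t : ℝ, t ≤ -2 → H t = 0) (x : ℝ) :
    ∫ w, 𝓕 (profile H x) w = ((H x ^ 2 : ℝ) : ℂ) := by
  have hc : Continuous (profile H x) := (profile_contDiff hH x).continuous
  have := congrFun (hc.fourierInv_fourier_eq
    (hc.integrable_of_hasCompactSupport (hasCompactSupport_profile hH0 x))
    (integrable_fourier_profile hH hH0 x)) 0
  rw [Real.fourierInv_eq'] at this
  simpa [profile, sq] using this

end Profile

/-! ### Gaussian factors -/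

section Gauss

variable {m : ℕ} (i0 : Fin m)

lemma gauss_continuous : Continuous (gauss i0) := by
  unfold gauss
  refine continuous_finsetProd _ fun i _ => ?_
  split_ifs
  · exact continuous_const
  · fun_prop

lemma mul_gauss_eq_prod (u : ℝ → ℂ) (x : Fin m → ℝ) :
    u (x i0) * gauss i0 x =
      ∏ i, (if i = i0 then u else fun t => ((Real.exp (-Real.pi * t ^ 2) : ℝ) : ℂ)) (x i) := by
  have : u (x i0) = ∏ i, if i = i0 then u (x i) else 1 := by simp
  rw [this, gauss, ← Finset.prod_mul_distrib]
  refine Finset.prod_congr rfl fun i _ => ?_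
  split_ifs <;> simp

lemma integrable_mul_gauss {u : ℝ → ℂ} (hu : Integrable u) :
    Integrable fun x : Fin m → ℝ => u (x i0) * gauss i0 x := by
  simp_rw [mul_gauss_eq_prod]
  refine Integrable.fintype_prod_dep fun i => ?_
  split_ifs
  · exact hu
  · exact (integrable_exp_neg_mul_sq Real.pi_pos).ofReal

lemma integral_mul_gauss (u : ℝ → ℂ) :
    ∫ x : Fin m → ℝ, u (x i0) * gauss i0 x = ∫ t, u t := by
  have hg : ∫ t : ℝ, ((Real.exp (-Real.pi * t ^ 2) : ℝ) : ℂ) = 1 := by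
    rw [integral_complex_ofReal, integral_gaussian, div_self Real.pi_ne_zero]; simp
  simp_rw [mul_gauss_eq_prod]
  rw [integral_fintype_prod_volume_eq_prod, Finset.prod_eq_single i0]
  · simp
  · intro i _ hi
    simp only [if_neg hi]
    exact hg
  · simp

/-- The Gaussian of width `√h` becomes the normalised one at scale `√(πh)`. -/
lemma exp_scaled_eq_gauss {h : ℝ} (hh : 0 < h) (x z : Fin m → ℝ) :
    ((Real.exp (-(1 / h) * ((∑ i, if i = i0 then 0 else (√(Real.pi * h) * x i) ^ 2) +
      ∑ i, if i = i0 then 0 else (√(Real.pi * h) * z i) ^ 2)) : ℝ) : ℂ) =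
      gauss i0 x * gauss i0 z := by
  have key : ∀ x : Fin m → ℝ,
      ((Real.exp (-(1 / h) * ∑ i, if i = i0 then 0 else (√(Real.pi * h) * x i) ^ 2) : ℝ) : ℂ) =
        gauss i0 x := fun x => by
    rw [Finset.mul_sum, Real.exp_sum, Complex.ofReal_prod, gauss]
    refine Finset.prod_congr rfl fun i _ => ?_
    split_ifs
    · simp
    · rw [mul_pow, Real.sq_sqrt (by positivity)]
      congr 2
      field_simp
  rw [mul_add, Real.exp_add, Complex.ofReal_mul, key, key]

end Gauss

/-! ### Absolute convergence and rescaling -/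

section Scaling

variable {m : ℕ} {lam : ℝ} {H : ℝ → ℝ} {a : (Fin m → ℝ) × (Fin m → ℝ) → ℂ} {i0 iLast : Fin m}

lemma exists_support_bound (hasupp : HasCompactSupport a) (i0 : Fin m) :
    ∃ R, 0 ≤ R ∧ ∀ q, a q ≠ 0 → |q.1 i0| ≤ R := by
  obtain ⟨R, hR⟩ := hasupp.isCompact.exists_bound_of_continuousOn
    (f := fun q : (Fin m → ℝ) × (Fin m → ℝ) => q.1 i0) (by fun_prop)
  exact ⟨max R 0, le_max_right _ _,
    fun q hq => (hR q (subset_tsupport _ hq)).trans (le_max_left _ _)⟩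

/-- The integrand is continuous with compact support: `a` confines `(x, ξ)`, and then the two
factors `H` confine `y₁`. -/
lemma integrable_wavePacketIntegrand (hH : Continuous H) (hH0 : ∀ t : ℝ, t ≤ -2 → H t = 0)
    (ha : Continuous a) (hasupp : HasCompactSupport a) (h : ℝ) :
    Integrable (wavePacketIntegrand m lam H a i0 iLast h) := by
  obtain ⟨R, hR0, hR⟩ := exists_support_bound hasupp i0
  refine Continuous.integrable_of_hasCompactSupport ?_ ?_
  · have h1 : ∀ i : Fin m, Continuous fun p : (Fin m → ℝ) × ℝ × (Fin m → ℝ) =>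
        if i = i0 then 0 else (p.1 i) ^ 2 := fun i => by
      split_ifs <;> fun_prop
    have h2 : ∀ i : Fin m, Continuous fun p : (Fin m → ℝ) × ℝ × (Fin m → ℝ) =>
        if i = i0 then 0 else (p.2.2 i - if i = iLast then 1 else 0) ^ 2 := fun i => by
      split_ifs <;> fun_prop
    have h3 := continuous_finsetSum Finset.univ fun i _ => h1 i
    have h4 := continuous_finsetSum Finset.univ fun i _ => h2 i
    unfold wavePacketIntegrand
    fun_prop
  · have hK : IsCompact ((fun z : ((Fin m → ℝ) × (Fin m → ℝ)) × ℝ => (z.1.1, z.2, z.1.2)) ''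
        (tsupport a ×ˢ Set.Icc (-(R + 2)) (R + 2))) :=
      (hasupp.isCompact.prod isCompact_Icc).image (by fun_prop)
    refine HasCompactSupport.intro hK fun p hp => ?_
    by_contra hne
    refine hp ⟨((p.1, p.2.2), p.2.1), ⟨?_, ?_⟩, rfl⟩
    · refine subset_tsupport _ fun h0 => hne ?_
      rw [wavePacketIntegrand, h0, mul_zero]
    · have hx : |p.1 i0| ≤ R := hR (p.1, p.2.2) fun h0 => hne (by
        rw [wavePacketIntegrand, h0, mul_zero])
      refine abs_le.1 (abs_le_of_mul_ne_zero hH0 hx fun h0 => hne ?_)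
      rcases mul_eq_zero.1 h0 with h0 | h0 <;> simp [wavePacketIntegrand, h0]

lemma integral_wavePacketIntegrand_y (h : ℝ) (q : (Fin m → ℝ) × (Fin m → ℝ)) :
    ∫ y, wavePacketIntegrand m lam H a i0 iLast h (q.1, y, q.2) =
      ((Real.exp (-2 * lam * q.1 i0) : ℝ) : ℂ) *
        𝓕 (profile H (q.1 i0)) (-(Real.pi * h)⁻¹ * q.2 i0) *
        ((Real.exp (-(1 / h) *
          ((∑ i, if i = i0 then 0 else (q.1 i) ^ 2) +
            ∑ i, if i = i0 then 0 else (q.2 i - if i = iLast then 1 else 0) ^ 2)) : ℝ) : ℂ) *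
        a q := by
  rw [Real.fourier_real_eq_integral_exp_smul, ← integral_const_mul, ← integral_mul_const,
    ← integral_mul_const]
  refine integral_congr_ae (.of_forall fun y => ?_)
  have he : ((-2 * Real.pi * y * (-(Real.pi * h)⁻¹ * q.2 i0) : ℝ) : ℂ) * Complex.I =
      (2 * Complex.I / h) * (↑y * ↑(q.2 i0)) := by
    have hpi : (Real.pi : ℂ) ≠ 0 := by exact_mod_cast Real.pi_ne_zero
    push_cast
    rw [mul_inv]
    field_simp
  simp only [wavePacketIntegrand]
  rw [he]
  simp only [profile, smul_eq_mul, Complex.ofReal_mul]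
  ring

/-- Affine change of variables `q ↦ scaledPoint i0 iLast c q`, whose Jacobian is `c ^ m`. -/
lemma integral_comp_scaledPoint (c : ℝ) (hc : 0 < c) (J : (Fin m → ℝ) × (Fin m → ℝ) → ℂ) :
    ∫ q, J q = ((c ^ m : ℝ) : ℂ) * ∫ q, J (scaledPoint i0 iLast c q) := by
  set d₁ : Fin m → ℝ := fun i => if i = i0 then 1 else √c with hd₁
  set d₂ : Fin m → ℝ := fun i => if i = i0 then -c else √c with hd₂
  set L : ((Fin m → ℝ) × (Fin m → ℝ)) →ₗ[ℝ] ((Fin m → ℝ) × (Fin m → ℝ)) :=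
    (Matrix.toLin' (Matrix.diagonal d₁)).prodMap (Matrix.toLin' (Matrix.diagonal d₂)) with hL
  have hdet : |LinearMap.det L| = c ^ m := by
    rw [hL, LinearMap.det_prodMap, LinearMap.det_toLin', LinearMap.det_toLin', Matrix.det_diagonal,
      Matrix.det_diagonal, ← Finset.prod_mul_distrib, Finset.abs_prod]
    rw [Finset.prod_congr rfl (g := fun _ => c)]
    · simp
    · intro i _
      simp only [hd₁, hd₂]
      split_ifs
      · simp [abs_of_pos hc]
      · rw [Real.mul_self_sqrt hc.le, abs_of_pos hc]
  have hcm : 0 < c ^ m := by positivity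
  have hdet0 : LinearMap.det L ≠ 0 := by
    intro h0; rw [h0, abs_zero] at hdet; exact hcm.ne hdet
  set v : (Fin m → ℝ) × (Fin m → ℝ) := (0, fun i => if i = iLast then 1 else 0) with hv
  have hLv : ∀ q, scaledPoint i0 iLast c q = L q + v := by
    intro q
    ext i <;> simp [scaledPoint, hL, hv, hd₁, hd₂, Matrix.mulVec_diagonal]
  have hemb : MeasurableEmbedding L :=
    (LinearEquiv.ofIsUnitDet (f := L) (v := Module.finBasis ℝ _) (v' := Module.finBasis ℝ _)
      (by rw [LinearMap.det_toMatrix]; exact hdet0.isUnit)).toContinuousLinearEquiv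
      |>.toHomeomorph.measurableEmbedding
  have hpi : (volume : Measure (Fin m → ℝ)).IsAddHaarMeasure := isAddHaarMeasure_volume_pi _
  have : (volume : Measure ((Fin m → ℝ) × (Fin m → ℝ))).IsAddHaarMeasure :=
    Measure.prod.instIsAddHaarMeasure _ _
  have hmap := Measure.map_linearMap_addHaar_eq_smul_addHaar
    (volume : Measure ((Fin m → ℝ) × (Fin m → ℝ))) hdet0
  rw [abs_inv, hdet] at hmap
  have : ∫ q, J (scaledPoint i0 iLast c q) = ((c ^ m)⁻¹ : ℝ) • ∫ q, J (q + v) := by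
    simp_rw [hLv]
    rw [← hemb.integral_map (g := fun q => J (q + v)), hmap, integral_smul_measure,
      ENNReal.toReal_ofReal (by positivity)]
  rw [this, integral_add_right_eq_self J v, Complex.real_smul, ← mul_assoc, ← Complex.ofReal_mul,
    mul_inv_cancel₀ hcm.ne', Complex.ofReal_one, one_mul]

lemma integral_wavePacketIntegrand (hne : i0 ≠ iLast) (hH : Continuous H)
    (hH0 : ∀ t : ℝ, t ≤ -2 → H t = 0) (ha : Continuous a) (hasupp : HasCompactSupport a)
    {h : ℝ} (hh : 0 < h) :
    ((((Real.pi * h) ^ m)⁻¹ : ℝ) : ℂ) * ∫ p, wavePacketIntegrand m lam H a i0 iLast h p =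
      ∫ q, scaledIntegrand lam H a i0 iLast (Real.pi * h) q := by
  have hc : 0 < Real.pi * h := by positivity
  set e : ((Fin m → ℝ) × (Fin m → ℝ)) × ℝ ≃ᵐ (Fin m → ℝ) × ℝ × (Fin m → ℝ) :=
    MeasurableEquiv.prodAssoc.trans
      ((MeasurableEquiv.refl _).prodCongr MeasurableEquiv.prodComm) with he
  have hmp : MeasurePreserving e :=
    ((MeasurePreserving.id volume).prod Measure.measurePreserving_swap).comp
      (measurePreserving_prodAssoc volume volume volume)
  have hint := integrable_wavePacketIntegrand (lam := lam) (i0 := i0) (iLast := iLast)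
    hH hH0 ha hasupp h
  have hint' : Integrable (fun z => wavePacketIntegrand m lam H a i0 iLast h (e z)) :=
    (hmp.integrable_comp_emb e.measurableEmbedding).2 hint
  rw [← hmp.integral_comp e.measurableEmbedding, Measure.volume_eq_prod, integral_prod _ hint']
  have hy : ∀ q : (Fin m → ℝ) × (Fin m → ℝ), ∀ y : ℝ, e (q, y) = (q.1, y, q.2) := fun q y => rfl
  simp_rw [hy, integral_wavePacketIntegrand_y]
  rw [integral_comp_scaledPoint (i0 := i0) (iLast := iLast) _ hc, ← mul_assoc,
    ← Complex.ofReal_mul, inv_mul_cancel₀ (by positivity), Complex.ofReal_one, one_mul]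
  refine integral_congr_ae (.of_forall fun q => ?_)
  have h1 : (scaledPoint i0 iLast (Real.pi * h) q).1 i0 = q.1 i0 := by simp [scaledPoint]
  have h2 : -(Real.pi * h)⁻¹ * (scaledPoint i0 iLast (Real.pi * h) q).2 i0 = q.2 i0 := by
    simp only [scaledPoint, if_true, if_neg hne, add_zero]
    field_simp
  have h3 : ∀ i, (if i = i0 then 0 else ((scaledPoint i0 iLast (Real.pi * h) q).1 i) ^ 2) =
      if i = i0 then 0 else (√(Real.pi * h) * q.1 i) ^ 2 := fun i => by
    split_ifs with hi
    · rfl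
    · simp [scaledPoint, hi]
  have h4 : ∀ i, (if i = i0 then 0 else ((scaledPoint i0 iLast (Real.pi * h) q).2 i -
      if i = iLast then 1 else 0) ^ 2) =
      if i = i0 then 0 else (√(Real.pi * h) * q.2 i) ^ 2 := fun i => by
    by_cases hi : i = i0
    · simp only [if_pos hi]
    · simp only [scaledPoint, if_neg hi, add_sub_cancel_right]
  simp only [h1, h2, h3, h4, exp_scaled_eq_gauss i0 hh, scaledIntegrand]

/-! ### The limit -/

lemma scaledPoint_continuous (i0 iLast : Fin m) :
    Continuous fun z : ℝ × ((Fin m → ℝ) × (Fin m → ℝ)) => scaledPoint i0 iLast z.1 z.2 := by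
  unfold scaledPoint
  refine (continuous_pi fun i => ?_).prodMk (continuous_pi fun i => ?_)
  · split_ifs <;> fun_prop
  · split_ifs <;> fun_prop

lemma aestronglyMeasurable_scaledIntegrand (hH : Continuous H) (ha : Continuous a) (c : ℝ) :
    AEStronglyMeasurable (scaledIntegrand lam H a i0 iLast c) := by
  have h1 : StronglyMeasurable fun q : (Fin m → ℝ) × (Fin m → ℝ) =>
      𝓕 (profile H (q.1 i0)) (q.2 i0) :=
    (stronglyMeasurable_fourier_profile hH).comp_measurable
      (g := fun q : (Fin m → ℝ) × (Fin m → ℝ) => (q.1 i0, q.2 i0)) (by fun_prop)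
  have h2 : Continuous fun q : (Fin m → ℝ) × (Fin m → ℝ) => gauss i0 q.1 * gauss i0 q.2 :=
    ((gauss_continuous i0).comp continuous_fst).mul ((gauss_continuous i0).comp continuous_snd)
  have h3 : Continuous fun q => a (scaledPoint i0 iLast c q) :=
    ha.comp ((scaledPoint_continuous i0 iLast).comp (continuous_const.prodMk continuous_id))
  have h4 : Continuous fun q : (Fin m → ℝ) × (Fin m → ℝ) =>
      ((Real.exp (-2 * lam * q.1 i0) : ℝ) : ℂ) := by fun_prop
  exact (((h4.stronglyMeasurable.mul h1).mul h2.stronglyMeasurable).mul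
    h3.stronglyMeasurable).aestronglyMeasurable

/-- An integrable majorant of the rescaled integrands, uniform in the scale. -/
lemma exists_scaledIntegrand_bound (hH : ContDiff ℝ (⊤ : ℕ∞) H)
    (hH0 : ∀ t : ℝ, t ≤ -2 → H t = 0) (ha : Continuous a) (hasupp : HasCompactSupport a) :
    ∃ B : (Fin m → ℝ) × (Fin m → ℝ) → ℝ, Integrable B ∧
      ∀ c q, ‖scaledIntegrand lam H a i0 iLast c q‖ ≤ B q := by
  obtain ⟨R, hR0, hR⟩ := exists_support_bound hasupp i0
  obtain ⟨C, hC0, hC⟩ := exists_fourier_profile_bound hH hH0 R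
  obtain ⟨A, hA⟩ := hasupp.exists_bound_of_continuous ha
  have hA0 : 0 ≤ A := (norm_nonneg _).trans (hA 0)
  set u₁ : ℝ → ℂ := (Set.Icc (-R) R).indicator fun _ => 1 with hu₁
  set u₂ : ℝ → ℂ := fun t => (((1 + t ^ 2)⁻¹ : ℝ) : ℂ) with hu₂
  have i1 : Integrable u₁ :=
    (integrable_indicator_iff measurableSet_Icc).2 (integrableOn_const (by simp))
  have i2 : Integrable u₂ := integrable_inv_one_add_sq.ofReal
  refine ⟨fun q => (Real.exp (2 * |lam| * R) * C * A) *
    ‖(u₁ (q.1 i0) * gauss i0 q.1) * (u₂ (q.2 i0) * gauss i0 q.2)‖,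
    (((integrable_mul_gauss i0 i1).mul_prod (integrable_mul_gauss i0 i2)).norm).const_mul _,
    fun c q => ?_⟩
  by_cases h0 : a (scaledPoint i0 iLast c q) = 0
  · rw [scaledIntegrand, h0, mul_zero, norm_zero]
    positivity
  have hx : |q.1 i0| ≤ R := by simpa [scaledPoint] using hR _ h0
  have h1 : u₁ (q.1 i0) = 1 := Set.indicator_of_mem (Set.mem_Icc.2 (abs_le.1 hx)) _
  have h2 : ‖u₂ (q.2 i0)‖ = (1 + q.2 i0 ^ 2)⁻¹ := by
    rw [hu₂, Complex.norm_real, Real.norm_of_nonneg (by positivity)]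
  have h3 : Real.exp (-2 * lam * q.1 i0) ≤ Real.exp (2 * |lam| * R) := by
    refine Real.exp_le_exp.2 ((le_abs_self _).trans ?_)
    rw [abs_mul, abs_mul, abs_neg, abs_two]
    gcongr
  simp only [scaledIntegrand, norm_mul, h1, h2, one_mul, Complex.norm_real,
    Real.norm_of_nonneg (Real.exp_pos _).le]
  calc _ ≤ Real.exp (2 * |lam| * R) * (C * (1 + q.2 i0 ^ 2)⁻¹) *
        (‖gauss i0 q.1‖ * ‖gauss i0 q.2‖) * A := by
        gcongr
        · exact hC _ hx _
        · exact hA _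
    _ = _ := by ring

lemma scaledPoint_zero (q : (Fin m → ℝ) × (Fin m → ℝ)) :
    scaledPoint i0 iLast 0 q =
      (fun i => if i = i0 then q.1 i0 else 0, fun i => if i = iLast then 1 else 0) := by
  refine Prod.ext (funext fun i => ?_) (funext fun i => ?_)
  · by_cases hi : i = i0 <;> simp [scaledPoint, hi]
  · by_cases hi : i = i0 <;> simp [scaledPoint, hi]

lemma integral_scaledIntegrand_zero (hH : ContDiff ℝ (⊤ : ℕ∞) H)
    (hH0 : ∀ t : ℝ, t ≤ -2 → H t = 0) (ha : Continuous a) (hasupp : HasCompactSupport a) :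
    ∫ q, scaledIntegrand lam H a i0 iLast 0 q =
      ∫ x₁ : ℝ, (↑((H x₁) ^ 2 * Real.exp (-2 * lam * x₁)) : ℂ) *
        a (fun i => if i = i0 then x₁ else 0, fun i => if i = iLast then 1 else 0) := by
  obtain ⟨B, hB, hle⟩ := exists_scaledIntegrand_bound (lam := lam) (i0 := i0) (iLast := iLast)
    hH hH0 ha hasupp
  have hint : Integrable (scaledIntegrand lam H a i0 iLast 0) :=
    hB.mono' (aestronglyMeasurable_scaledIntegrand hH.continuous ha 0) (.of_forall (hle 0))
  rw [Measure.volume_eq_prod, integral_prod _ hint, ← integral_mul_gauss i0]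
  refine integral_congr_ae (.of_forall fun x => ?_)
  simp only [scaledIntegrand, scaledPoint_zero]
  have hξ := integral_mul_gauss i0 (𝓕 (profile H (x i0)))
  rw [integral_fourier_profile hH hH0] at hξ
  set b := a (fun i => if i = i0 then x i0 else 0, fun i => if i = iLast then 1 else 0)
  set E := ((Real.exp (-2 * lam * x i0) : ℝ) : ℂ) with hE
  calc ∫ z : Fin m → ℝ, E * 𝓕 (profile H (x i0)) (z i0) * (gauss i0 x * gauss i0 z) * b
      = ∫ z : Fin m → ℝ, (E * gauss i0 x * b) * (𝓕 (profile H (x i0)) (z i0) * gauss i0 z) := by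
        congr 1; ext z; ring
    _ = _ := by
        rw [integral_const_mul, hξ, Complex.ofReal_mul, hE]
        ring

end Scaling

end

/-- The semiclassical defect measure computation for the wave-packet family of
Section 4.3: the triple integral converges absolutely for each `h > 0` and
`(πh)^{-m} ∭ e^{-2λx₁} H(x₁+y₁)H(x₁-y₁) e^{(2i/h)y₁ξ₁} e^{-(|x'|²+|ξ'-ε'ₘ|²)/h} a(x,ξ)
  → ∫ H(x₁)² e^{-2λx₁} a((x₁,0),(0,ε'ₘ)) dx₁` as `h → 0⁺`. -/
theorem stmt_6 (m : ℕ) (hm : 2 ≤ m) (lam : ℝ)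
    (H : ℝ → ℝ) (hH : ContDiff ℝ (⊤ : ℕ∞) H)
    (hH0 : ∀ t : ℝ, t ≤ -2 → H t = 0) (hH1 : ∀ t : ℝ, -1 ≤ t → H t = 1)
    (a : (Fin m → ℝ) × (Fin m → ℝ) → ℂ) (ha : ContDiff ℝ (⊤ : ℕ∞) a)
    (hasupp : HasCompactSupport a)
    (i0 iLast : Fin m) (hi0 : (i0 : ℕ) = 0) (hiLast : (iLast : ℕ) = m - 1) :
    (∀ h : ℝ, 0 < h → Integrable (wavePacketIntegrand m lam H a i0 iLast h)) ∧
    Tendsto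
      (fun h : ℝ => (↑(((Real.pi * h) ^ m)⁻¹) : ℂ) *
        ∫ p : (Fin m → ℝ) × ℝ × (Fin m → ℝ), wavePacketIntegrand m lam H a i0 iLast h p)
      (𝓝[>] (0 : ℝ))
      (𝓝 (∫ x₁ : ℝ, (↑((H x₁) ^ 2 * Real.exp (-2 * lam * x₁)) : ℂ) *
        a (fun i => if i = i0 then x₁ else 0, fun i => if i = iLast then 1 else 0))) := by
  have hne : i0 ≠ iLast := by
    intro h
    have := congrArg Fin.val h
    omega
  have hac := ha.continuous
  refine ⟨fun h _ => integrable_wavePacketIntegrand hH.continuous hH0 hac hasupp h, ?_⟩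
  rw [← integral_scaledIntegrand_zero hH hH0 hac hasupp]
  obtain ⟨B, hB, hle⟩ := exists_scaledIntegrand_bound (lam := lam) (i0 := i0) (iLast := iLast)
    hH hH0 hac hasupp
  have hlim : Tendsto (fun h : ℝ => ∫ q, scaledIntegrand lam H a i0 iLast (Real.pi * h) q)
      (𝓝[>] (0 : ℝ)) (𝓝 (∫ q, scaledIntegrand lam H a i0 iLast 0 q)) := by
    refine tendsto_integral_filter_of_dominated_convergence B
      (.of_forall fun h => aestronglyMeasurable_scaledIntegrand hH.continuous hac _)
      (.of_forall fun h => .of_forall (hle _)) hB (.of_forall fun q => ?_)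
    have hcont : Continuous fun h : ℝ => a (scaledPoint i0 iLast (Real.pi * h) q) :=
      hac.comp ((scaledPoint_continuous i0 iLast).comp
        ((continuous_const.mul continuous_id).prodMk continuous_const))
    have := (hcont.tendsto 0).mono_left (nhdsWithin_le_nhds (s := Set.Ioi 0))
    rw [mul_zero] at this
    exact this.const_mul _
  refine hlim.congr' ?_
  filter_upwards [self_mem_nhdsWithin] with h hh
  exact (integral_wavePacketIntegrand hne hH.continuous hH0 hac hasupp hh).symm
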